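/- Let 1/2<γ<1 and 0<ε<1, and let Φ:ℝ×S²→ℂ be smooth with ‖Φ‖_{1,∞,γ} ≤ ε. Set 𝒥_α(ρ,σ) := L_α(σ)·Im( Φ(ρ,σ)·conj(∂_qΦ(ρ,σ)) ) for α=0,…,3 (so 𝒥₀ = −Im(Φ·conj(∂_qΦ))), and define Ã_α(t,x) := (1/4π)∫_{q}^{∞}∫_{S²} ( 𝒥_α(ρ,σ) / (t + ρ − ⟨x,σ⟩) )·χ(⟨ρ⟩/(t+r)) dS(σ) dρ and Ã_L := L^α(ω)Ã_α. Suppose there exist 𝐪∈ℝ and C₀>0 such that for all t≥0, r>0, ω∈S² with q=r−t ≤ 0: | r·Ã_L(t,rω) − 𝐪/(4π) | ≤ C₀( ε⟨q₋⟩^{−γ} + ε⟨q⟩^{1−ε}⟨r⟩^{ε−1} ). Then 𝐪 = ∫_{−∞}^{∞}∫_{S²} 𝒥₀(ρ,σ) dS(σ) dρ = −∫_{−∞}^{∞}∫_{S²} Im( Φ·conj(∂_qΦ) ) dS dρ. -/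

import Mathlib

noncomputable section

open Real MeasureTheory Filter
open scoped RealInnerProductSpace Topology

/-- Spatial points: `ℝ³` with the Euclidean norm. -/
abbrev Pt : Type := EuclideanSpace ℝ (Fin 3)

/-- `r = |x|`. -/
def rad (x : Pt) : ℝ := ‖x‖

/-- Japanese bracket `⟨a⟩ = (1+a²)^{1/2}`. -/
def jb (a : ℝ) : ℝ := Real.sqrt (1 + a ^ 2)

/-- `∂_t`. -/
def dT (f : ℝ → Pt → ℂ) : ℝ → Pt → ℂ := fun t x => deriv (fun s => f s x) t

/-- `∂_i`. -/
def dX (i : Fin 3) (f : ℝ → Pt → ℂ) : ℝ → Pt → ℂ :=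
  fun t x => fderiv ℝ (fun y => f t y) x (EuclideanSpace.single i 1)

/-- `∂_r = Σ (x_i/r) ∂_i`. -/
def dR (f : ℝ → Pt → ℂ) : ℝ → Pt → ℂ :=
  fun t x => ((rad x : ℝ) : ℂ)⁻¹ * ∑ i, ((x i : ℝ) : ℂ) * dX i f t x

/-- `L = ∂_t + ∂_r`. -/
def dL (f : ℝ → Pt → ℂ) : ℝ → Pt → ℂ := fun t x => dT f t x + dR f t x

/-- `L̲ = ∂_t − ∂_r`. -/
def dLbar (f : ℝ → Pt → ℂ) : ℝ → Pt → ℂ := fun t x => dT f t x - dR f t x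

/-- angular derivative `∂̸_i = ∂_i − ω_i ∂_r`. -/
def dAng (i : Fin 3) (f : ℝ → Pt → ℂ) : ℝ → Pt → ℂ :=
  fun t x => dX i f t x - ((x i / rad x : ℝ) : ℂ) * dR f t x

/-- `|∂̸ f|²`. -/
def angSq (f : ℝ → Pt → ℂ) (t : ℝ) (x : Pt) : ℝ := ∑ i, ‖dAng i f t x‖ ^ 2

/-- multiplication by `r`. -/
def rmul (f : ℝ → Pt → ℂ) : ℝ → Pt → ℂ := fun t x => ((rad x : ℝ) : ℂ) * f t x

/-- `□ = −∂_t² + Δ`. -/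
def box (f : ℝ → Pt → ℂ) : ℝ → Pt → ℂ :=
  fun t x => - dT (dT f) t x + ∑ i, dX i (dX i f) t x

/-- rotation `Ω_{ij} = x_i ∂_j − x_j ∂_i`. -/
def vrot (i j : Fin 3) (f : ℝ → Pt → ℂ) : ℝ → Pt → ℂ :=
  fun t x => ((x i : ℝ) : ℂ) * dX j f t x - ((x j : ℝ) : ℂ) * dX i f t x

/-- boost `Ω_{0i} = t ∂_i + x_i ∂_t`. -/
def vboost (i : Fin 3) (f : ℝ → Pt → ℂ) : ℝ → Pt → ℂ :=
  fun t x => (t : ℂ) * dX i f t x + ((x i : ℝ) : ℂ) * dT f t x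

/-- scaling `S = t ∂_t + r ∂_r`. -/
def vscal (f : ℝ → Pt → ℂ) : ℝ → Pt → ℂ :=
  fun t x => (t : ℂ) * dT f t x + ((rad x : ℝ) : ℂ) * dR f t x

/-- The commutator vector fields `Z`. -/
inductive VF : Type
  | time : VF
  | space : Fin 3 → VF
  | rot : Fin 3 → Fin 3 → VF
  | boost : Fin 3 → VF
  | scal : VF
  deriving DecidableEq, Fintype

/-- Action of a commutator vector field on a function. -/
def VF.app : VF → (ℝ → Pt → ℂ) → (ℝ → Pt → ℂ)
  | time => dT
  | space i => dX i
  | rot i j => vrot i j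
  | boost i => vboost i
  | scal => vscal

/-- `Z^I` for a multiindex `I` (a list of vector fields). -/
def Ziter : List VF → (ℝ → Pt → ℂ) → ℝ → Pt → ℂ
  | [], f => f
  | z :: l, f => z.app (Ziter l f)

/-- `C^∞` smoothness for a function of `(t,x)`. -/
def Smooth2 (f : ℝ → Pt → ℂ) : Prop := ContDiff ℝ (⊤ : ℕ∞) (Function.uncurry f)

/-- real-valued versions of the derivative operators -/
def dTR (f : ℝ → Pt → ℝ) : ℝ → Pt → ℝ := fun t x => deriv (fun s => f s x) t

def dXR (i : Fin 3) (f : ℝ → Pt → ℝ) : ℝ → Pt → ℝ :=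
  fun t x => fderiv ℝ (fun y => f t y) x (EuclideanSpace.single i 1)

def boxR (f : ℝ → Pt → ℝ) : ℝ → Pt → ℝ :=
  fun t x => - dTR (dTR f) t x + ∑ i, dXR i (dXR i f) t x

/-- `∂_q` acting on radiation fields `F(q,ω)`. -/
def dq (F : ℝ → Pt → ℂ) : ℝ → Pt → ℂ := fun q ω => deriv (fun s => F s ω) q

/-- `∂_{ω_i}` acting on radiation fields. -/
def dOm (i : Fin 3) (F : ℝ → Pt → ℂ) : ℝ → Pt → ℂ :=
  fun q ω => fderiv ℝ (fun y => F q y) ω (EuclideanSpace.single i 1)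

/-- angular rotation `ω_i ∂_{ω_j} − ω_j ∂_{ω_i}` on radiation fields. -/
def aRot (i j : Fin 3) (F : ℝ → Pt → ℂ) : ℝ → Pt → ℂ :=
  fun q ω => ((ω i : ℝ) : ℂ) * dOm j F q ω - ((ω j : ℝ) : ℂ) * dOm i F q ω

/-- `⟨q⟩∂_q` on radiation fields. -/
def qdq (F : ℝ → Pt → ℂ) : ℝ → Pt → ℂ := fun q ω => ((jb q : ℝ) : ℂ) * dq F q ω

/-- `q∂_q` on radiation fields. -/
def qmdq (F : ℝ → Pt → ℂ) : ℝ → Pt → ℂ := fun q ω => (q : ℂ) * dq F q ω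

/-- iterated angular derivatives `∂_ω^α` (as iterated rotations). -/
def aIter : List (Fin 3 × Fin 3) → (ℝ → Pt → ℂ) → ℝ → Pt → ℂ
  | [], F => F
  | p :: l, F => aRot p.1 p.2 (aIter l F)

/-- `‖F‖_{N,∞,γ} ≤ ε`, stated term by term: every seminorm
`sup |(⟨q⟩∂_q)^k ∂_ω^α F| ⟨q⟩^γ` with `k+|α| ≤ N` is at most `ε`. -/
def RadBound (N : ℕ) (γ ε : ℝ) (F : ℝ → Pt → ℂ) : Prop :=
  ∀ (k : ℕ) (l : List (Fin 3 × Fin 3)), k + l.length ≤ N →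
    ∀ (q : ℝ) (ω : Pt), rad ω = 1 →
      ‖(qdq^[k]) (aIter l F) q ω‖ * jb q ^ γ ≤ ε

/-- spacetime indices `α ∈ {0,1,2,3}`: `none` is the time index. -/
abbrev Ix : Type := Option (Fin 3)

/-- `L^α(ω) = (1, ω)`. -/
def Lup : Ix → Pt → ℝ
  | none => fun _ => 1
  | some i => fun ω => ω i

/-- `L_α(ω) = (−1, ω)`. -/
def Llow : Ix → Pt → ℝ
  | none => fun _ => -1
  | some i => fun ω => ω i

/-- `∂_α`. -/
def pd : Ix → (ℝ → Pt → ℂ) → ℝ → Pt → ℂ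
  | none => dT
  | some i => dX i

/-- `∂_α` (real valued). -/
def pdR : Ix → (ℝ → Pt → ℝ) → ℝ → Pt → ℝ
  | none => dTR
  | some i => dXR i

/-- the surface measure on the unit sphere `S² ⊆ ℝ³`. -/
def sphM : Measure (Metric.sphere (0 : Pt) 1) := (volume : Measure Pt).toSphere

/-- weighted `L²` norm `(∫ |g(t,x)|² w(r−t) dx)^{1/2}`. -/
def sqL2 (w : ℝ → ℝ) (g : ℝ → Pt → ℂ) (t : ℝ) : ℝ :=
  Real.sqrt (∫ x : Pt, ‖g t x‖ ^ 2 * w (rad x - t))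


/-- `𝒥_α(q,σ) = L_α(σ)·Im(Φ(q,σ)·conj(∂_qΦ(q,σ)))` -/
def Jr (Φ : ℝ → Pt → ℂ) (α : Ix) (q : ℝ) (σ : Pt) : ℝ :=
  Llow α σ * (Φ q σ * (starRingEnd ℂ) (dq Φ q σ)).im

/-- `Ã_α(t,x) = (1/4π)∫_{q}^∞ ∫_{S²} (𝒥_α(ρ,σ)/(t+ρ−⟨x,σ⟩))·χ(⟨ρ⟩/(t+r)) dS(σ) dρ` -/
def Atilde (χ : ℝ → ℝ) (Φ : ℝ → Pt → ℂ) (α : Ix) (t : ℝ) (x : Pt) : ℝ :=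
  (1 / (4 * π)) * ∫ ρ in Set.Ioi (rad x - t),
    (∫ σ : Metric.sphere (0 : Pt) 1,
        Jr Φ α ρ σ / (t + ρ - ⟪x, (σ : Pt)⟫) ∂sphM) * χ (jb ρ / (t + rad x))

/-- `Ã_L = L^α(ω) Ã_α = Ã_0 + Σ ω_i Ã_i` -/
def AtildeL (χ : ℝ → ℝ) (Φ : ℝ → Pt → ℂ) (t : ℝ) (x : Pt) : ℝ :=
  Atilde χ Φ none t x + ∑ i, ((rad x)⁻¹ * x i) * Atilde χ Φ (some i) t x

/-!
Go to infinity along a curve in a fixed direction `ω` on which `r → ∞`, `u := t - r → ∞` and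
`u / r → 0`: there the assumed error tends to `0`, so `r Ã_L → 𝐪 / 4π`. On the other hand
`L^α(ω) L_α(σ) = ⟨ω, σ⟩ - 1` and `t + ρ - ⟨x, σ⟩ = (ρ + u) + r (1 - ⟨ω, σ⟩)`, so that
`r Ã_L = (1 / 4π) ∫_{ρ > -u} ∫_{S²} r (1 - ⟨ω, σ⟩) / ((ρ + u) + r (1 - ⟨ω, σ⟩)) 𝒥₀(ρ, σ) χ`.
The contraction with `L` cancels the singularity of the kernel: the remaining weight lies in
`[0, 1]` and tends to `1` for almost every `σ`, and dominated convergence yields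
`(1 / 4π) ∫∫ 𝒥₀`. Each `Ã_α` on its own does see the singularity at `ρ = -u`, `σ = ω`. It is
integrable because `(a + b)⁻¹ ≤ a ^ (-3/4) * b ^ (-1/4)` and `(1 - ⟨ω, σ⟩) ^ (-1/4)` is
integrable on the sphere.
-/

section UnitVectors

open Metric

variable {E : Type*} [NormedAddCommGroup E] [InnerProductSpace ℝ E]

lemma exists_norm_eq_one_inner_eq_zero (hE : 2 ≤ Module.finrank ℝ E) (ω : E) :
    ∃ v : E, ‖v‖ = 1 ∧ ⟪ω, v⟫ = 0 := by
  have : FiniteDimensional ℝ E := Module.finite_of_finrank_pos (by lia)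
  have : Nontrivial (ℝ ∙ ω)ᗮ := by
    have := (ℝ ∙ ω).finrank_add_finrank_orthogonal
    have : Module.finrank ℝ (ℝ ∙ ω) ≤ 1 := by simpa using finrank_span_le_card (R := ℝ) {ω}
    exact Module.nontrivial_of_finrank_pos (R := ℝ) (by lia)
  obtain ⟨v, hv⟩ := exists_norm_eq (ℝ ∙ ω)ᗮ zero_le_one
  exact ⟨v, hv, Submodule.mem_orthogonal_singleton_iff_inner_right.1 v.2⟩

lemma inner_sphere_le_one {ω : E} (hω : ‖ω‖ = 1) (σ : sphere (0 : E) 1) : ⟪ω, (σ : E)⟫ ≤ 1 := by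
  simpa [hω] using real_inner_le_norm ω (σ : E)

lemma sq_inner_div_two_le_one_sub_inner {ω v : E} (hω : ‖ω‖ = 1) (hv : ‖v‖ = 1)
    (hωv : ⟪ω, v⟫ = 0) (σ : sphere (0 : E) 1) :
    ⟪v, (σ : E)⟫ ^ 2 / 2 ≤ 1 - ⟪ω, (σ : E)⟫ := by
  have on : Orthonormal ℝ ![ω, v] := by simp [hω, hv, hωv]
  have bessel : ⟪ω, (σ : E)⟫ ^ 2 + ⟪v, (σ : E)⟫ ^ 2 ≤ 1 := by
    simpa [Fin.sum_univ_two] using on.sum_inner_products_le (σ : E) (s := Finset.univ)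
  nlinarith [sq_nonneg (1 - ⟪ω, (σ : E)⟫)]

end UnitVectors

section SphereMeasure

open Metric

variable {E : Type*} [NormedAddCommGroup E] [InnerProductSpace ℝ E] [FiniteDimensional ℝ E]
  [MeasurableSpace E] [BorelSpace E]

lemma integrable_toSphere_iff_integrableOn_ball [Nontrivial E] {F : Type*} [NormedAddCommGroup F]
    {μ : Measure E} [μ.IsAddHaarMeasure] {f : E → F} :
    Integrable (fun σ : sphere (0 : E) 1 => f σ) μ.toSphere ↔
      IntegrableOn (fun x => f (‖x‖⁻¹ • x)) (ball 0 1) μ := by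
  let one : Set.Ioi (0 : ℝ) := ⟨1, Set.mem_Ioi.2 one_pos⟩
  let ν := (Measure.volumeIoiPow (Module.finrank ℝ E - 1)).restrict (Set.Iio one)
  have hν : ν Set.univ = ENNReal.ofReal (1 / Module.finrank ℝ E) := by
    rw [Measure.restrict_apply_univ, Measure.volumeIoiPow_apply_Iio, one_pow,
      ← Nat.cast_add_one, Nat.sub_add_cancel Module.finrank_pos]
  have : IsFiniteMeasure ν := ⟨hν ▸ ENNReal.ofReal_lt_top⟩
  have hν0 : ν ≠ 0 := by
    rw [← Measure.measure_univ_pos, hν]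
    simpa using Module.finrank_pos (R := ℝ) (M := E)
  have polar := μ.measurePreserving_homeomorphUnitSphereProd.integrableOn_comp_preimage
    (homeomorphUnitSphereProd E).measurableEmbedding
    (f := fun p : sphere (0 : E) 1 × Set.Ioi (0 : ℝ) => f p.1) (s := Set.univ ×ˢ Set.Iio one)
  have punctured : IntegrableOn (fun x => f (‖x‖⁻¹ • x)) (ball 0 1) μ ↔
      IntegrableOn (fun x => f (‖x‖⁻¹ • x)) (ball 0 1 \ {0}) μ :=
    integrableOn_congr_set_ae (sdiff_null_ae_eq_self (measure_singleton 0)).symm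
  have punctured_subset : ball (0 : E) 1 \ {0} ⊆
      Set.range (Subtype.val : ({0}ᶜ : Set E) → E) :=
    fun x hx => ⟨⟨x, hx.2⟩, rfl⟩
  have preimage_eq : homeomorphUnitSphereProd E ⁻¹' Set.univ ×ˢ Set.Iio one =
      Subtype.val ⁻¹' (ball (0 : E) 1 \ {0}) := by
    ext x
    simp [one, ← Subtype.coe_lt_coe, homeomorphUnitSphereProd_apply_snd_coe]
  rw [← Integrable.comp_fst_iff (f := fun σ : sphere (0 : E) 1 => f σ) hν0,
    ← Measure.restrict_univ (μ := μ.toSphere), Measure.prod_restrict, ← IntegrableOn, ← polar,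
    punctured, (MeasurableEmbedding.subtype_coe
      (measurableSet_singleton (0 : E)).compl).integrableOn_iff_comap punctured_subset, preimage_eq]
  simp only [Function.comp_def, homeomorphUnitSphereProd_apply_fst_coe]

open scoped Pointwise in
lemma ae_toSphere_inner_ne_zero {μ : Measure E} [μ.IsAddHaarMeasure] {v : E} (hv : v ≠ 0) :
    ∀ᵐ σ : sphere (0 : E) 1 ∂μ.toSphere, ⟪v, (σ : E)⟫ ≠ 0 := by
  have cone_subset : Set.Ioo (0 : ℝ) 1 • ((↑) '' {σ : sphere (0 : E) 1 | ⟪v, (σ : E)⟫ = 0}) ⊆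
      ((ℝ ∙ v)ᗮ : Set E) := by
    rintro _ ⟨a, -, _, ⟨σ, hσ, rfl⟩, rfl⟩
    exact (ℝ ∙ v)ᗮ.smul_mem a (Submodule.mem_orthogonal_singleton_iff_inner_right.2 hσ)
  have orthogonal_ne_top : (ℝ ∙ v)ᗮ ≠ ⊤ := by
    rwa [Ne, Submodule.orthogonal_eq_top_iff, Submodule.span_singleton_eq_bot]
  simp only [ae_iff, ne_eq, not_not]
  rw [Measure.toSphere_apply' _ (measurableSet_eq_fun (by fun_prop) measurable_const),
    measure_mono_null cone_subset (Measure.addHaar_submodule _ _ orthogonal_ne_top), mul_zero]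

lemma integrableOn_ball_abs_inner_rpow {v : E} (hv : ‖v‖ = 1) {p : ℝ} (hp : -1 < p) :
    IntegrableOn (fun x => |⟪v, x⟫| ^ p) (ball 0 1) := by
  classical
  obtain ⟨u, b, hvu, hb⟩ := Orthonormal.exists_orthonormalBasis_extension (𝕜 := ℝ) (v := {v})
    (by simpa using hv)
  let i : u := ⟨v, by simpa using hvu⟩
  have hbi : b i = v := congrFun hb i
  let F : u → ℝ → ℝ := fun j => Set.indicator (Set.Icc (-1) 1) fun y => if j = i then |y| ^ p else 1
  have integrable_factor (j : u) : Integrable (F j) := by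
    refine (integrable_indicator_iff measurableSet_Icc).2 ?_
    split_ifs with hj
    · have loc : LocallyIntegrable (fun y : ℝ => |y| ^ p) :=
        locallyIntegrable_of_norm_le_rpow (C := 1) (α := -p) (by simp) (by simpa using by linarith)
          (ae_of_all _ fun y => by simp [abs_of_nonneg (rpow_nonneg (abs_nonneg y) p)])
          (Measurable.aestronglyMeasurable (by fun_prop))
      exact loc.integrableOn_isCompact isCompact_Icc
    · exact integrableOn_const (by simp)
  have integrable_prod : Integrable fun x : E => ∏ j, F j (b.repr x j) :=
    (((PiLp.volume_preserving_ofLp u).comp b.measurePreserving_repr).integrable_comp_emb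
      ((MeasurableEquiv.toLp 2 (u → ℝ)).symm.measurableEmbedding.comp
        b.repr.toHomeomorph.measurableEmbedding)).2 (Integrable.fintype_prod integrable_factor)
  refine integrable_prod.integrableOn.congr_fun (fun x hx => ?_) measurableSet_ball
  have coord_mem (j : u) : b.repr x j ∈ Set.Icc (-1 : ℝ) 1 := by
    rw [Set.mem_Icc, ← abs_le, b.repr_apply_apply]
    calc |⟪b j, x⟫| ≤ ‖b j‖ * ‖x‖ := abs_real_inner_le_norm _ _
      _ ≤ 1 := by simpa using (mem_ball_zero_iff.1 hx).le
  calc ∏ j, F j (b.repr x j) = ∏ j, if j = i then |b.repr x j| ^ p else 1 :=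
        Finset.prod_congr rfl fun j _ => Set.indicator_of_mem (coord_mem j) _
    _ = |⟪v, x⟫| ^ p := by simp [b.repr_apply_apply, hbi]

lemma integrable_toSphere_abs_inner_rpow {v : E} (hv : ‖v‖ = 1) {p : ℝ} (hp : -1 < p)
    (hp0 : p ≤ 0) :
    Integrable (fun σ : sphere (0 : E) 1 => |⟪v, (σ : E)⟫| ^ p) volume.toSphere := by
  have : Nontrivial E := ⟨v, 0, norm_ne_zero_iff.1 (by simp [hv])⟩
  refine (integrable_toSphere_iff_integrableOn_ball (f := fun x => |⟪v, x⟫| ^ p)).2 ?_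
  refine (integrableOn_ball_abs_inner_rpow hv hp).mono'
    (Measurable.aestronglyMeasurable (by fun_prop)) ?_
  filter_upwards [ae_restrict_mem measurableSet_ball] with x hx
  have radial_le_one : ‖x‖⁻¹ ^ p ≤ 1 := by
    rw [inv_rpow (norm_nonneg x), ← rpow_neg (norm_nonneg x)]
    exact rpow_le_one (norm_nonneg x) (mem_ball_zero_iff.1 hx).le (by linarith)
  rw [real_inner_smul_right, abs_mul, mul_rpow (abs_nonneg _) (abs_nonneg _), abs_inv, abs_norm,
    norm_of_nonneg (by positivity)]
  exact mul_le_of_le_one_left (by positivity) radial_le_one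

lemma ae_toSphere_inner_lt_one (hE : 2 ≤ Module.finrank ℝ E) {ω : E} (hω : ‖ω‖ = 1) :
    ∀ᵐ σ : sphere (0 : E) 1 ∂volume.toSphere, ⟪ω, (σ : E)⟫ < 1 := by
  obtain ⟨v, hv, hωv⟩ := exists_norm_eq_one_inner_eq_zero hE ω
  filter_upwards [ae_toSphere_inner_ne_zero (norm_ne_zero_iff.1 (hv ▸ one_ne_zero))] with σ hσ
  linarith [sq_inner_div_two_le_one_sub_inner hω hv hωv σ, pow_pos (abs_pos.2 hσ) 2,
    sq_abs ⟪v, (σ : E)⟫]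

lemma integrable_toSphere_one_sub_inner_rpow (hE : 2 ≤ Module.finrank ℝ E) {ω : E} (hω : ‖ω‖ = 1)
    {p : ℝ} (hp : -(1 / 2) < p) (hp0 : p ≤ 0) :
    Integrable (fun σ : sphere (0 : E) 1 => (1 - ⟪ω, (σ : E)⟫) ^ p) volume.toSphere := by
  obtain ⟨v, hv, hωv⟩ := exists_norm_eq_one_inner_eq_zero hE ω
  refine ((integrable_toSphere_abs_inner_rpow hv (p := 2 * p) (by linarith)
    (by linarith)).mul_const (2⁻¹ ^ p)).mono'
    (Measurable.aestronglyMeasurable (by fun_prop)) ?_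
  filter_upwards [ae_toSphere_inner_ne_zero (norm_ne_zero_iff.1 (hv ▸ one_ne_zero))] with σ hσ
  rw [norm_of_nonneg (rpow_nonneg (sub_nonneg.2 (inner_sphere_le_one hω σ)) p)]
  calc (1 - ⟪ω, (σ : E)⟫) ^ p ≤ (|⟪v, (σ : E)⟫| ^ 2 * 2⁻¹) ^ p :=
        rpow_le_rpow_of_nonpos (by positivity)
          (by simpa [div_eq_mul_inv] using sq_inner_div_two_le_one_sub_inner hω hv hωv σ) hp0
    _ = |⟪v, (σ : E)⟫| ^ (2 * p) * 2⁻¹ ^ p := by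
        rw [mul_rpow (by positivity) (by positivity), ← rpow_natCast, ← rpow_mul (abs_nonneg _),
          Nat.cast_two]

end SphereMeasure

section Weights

lemma inv_add_le_rpow_mul_rpow {a b θ : ℝ} (ha : 0 < a) (hb : 0 < b) (hθ : 0 ≤ θ) (hθ1 : θ ≤ 1) :
    (a + b)⁻¹ ≤ a ^ (-θ) * b ^ (-(1 - θ)) := by
  have geom_mean_le : a ^ θ * b ^ (1 - θ) ≤ a + b :=
    calc a ^ θ * b ^ (1 - θ) ≤ θ * a + (1 - θ) * b :=
          geom_mean_le_arith_mean2_weighted hθ (by linarith) ha.le hb.le (by ring)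
      _ ≤ a + b := by nlinarith
  rw [rpow_neg ha.le, rpow_neg hb.le, ← mul_inv]
  exact inv_anti₀ (by positivity) geom_mean_le

lemma integrableOn_Ioi_sub_rpow_mul {g : ℝ → ℝ} (hg : Integrable g) {B : ℝ}
    (hgB : ∀ x, |g x| ≤ B) {p : ℝ} (hp : -1 < p) (hp0 : p ≤ 0) (a : ℝ) :
    IntegrableOn (fun x => (x - a) ^ p * g x) (Set.Ioi a) := by
  have near : IntegrableOn (fun x => (x - a) ^ p * g x) (Set.Ioc a (a + 1)) := by
    have : IntervalIntegrable (fun x => (x - a) ^ p) volume a (a + 1) := by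
      simpa [add_comm] using
        (intervalIntegral.intervalIntegrable_rpow' (a := 0) (b := 1) hp).comp_sub_right a
    exact ((intervalIntegrable_iff_integrableOn_Ioc_of_le (by linarith)).1 this).mul_bdd
      hg.aestronglyMeasurable.restrict (ae_of_all _ hgB)
  have far : IntegrableOn (fun x => (x - a) ^ p * g x) (Set.Ioi (a + 1)) := by
    refine hg.integrableOn.bdd_mul (c := 1) (Measurable.aestronglyMeasurable (by fun_prop)) ?_
    filter_upwards [ae_restrict_mem measurableSet_Ioi] with x hx
    have one_le : 1 ≤ x - a := by linarith [Set.mem_Ioi.1 hx]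
    rw [norm_of_nonneg (by positivity)]
    exact rpow_le_one_of_one_le_of_nonpos one_le hp0
  rw [← Set.Ioc_union_Ioi_eq_Ioi (by linarith : a ≤ a + 1)]
  exact near.union far

lemma abs_div_add_self_le_one {a s : ℝ} (ha : 0 < a) (hs : 0 ≤ s) : |s / (a + s)| ≤ 1 := by
  rw [abs_of_nonneg (by positivity)]
  exact div_le_one_of_le₀ (by linarith) (by positivity)

lemma tendsto_mul_div_add_mul {ι : Type*} {l : Filter ι} {r u : ι → ℝ} (hu : Tendsto u l atTop)
    (hru : Tendsto (fun i => r i / u i) l atTop) (ρ : ℝ) {c : ℝ} (hc : 0 < c) :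
    Tendsto (fun i => r i * c / (ρ + u i + r i * c)) l (𝓝 1) := by
  have ratio : Tendsto (fun i => (ρ * (u i)⁻¹ + 1) * (r i / u i * c)⁻¹) l (𝓝 0) := by
    simpa using ((hu.inv_tendsto_atTop.const_mul ρ).add_const 1).mul
      (hru.atTop_mul_const hc).inv_tendsto_atTop
  have : Tendsto (fun i => ((ρ * (u i)⁻¹ + 1) * (r i / u i * c)⁻¹ + 1)⁻¹) l (𝓝 1) := by
    simpa using (ratio.add_const 1).inv₀ (by norm_num)
  refine this.congr' ?_
  filter_upwards [hu.eventually_gt_atTop 0, hru.eventually_gt_atTop 0] with i hui hri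
  have hri : 0 < r i := by simpa [hui.le] using (div_pos_iff_of_pos_right hui).1 hri
  field_simp

end Weights

section Cone

open Metric

variable {E : Type*} [NormedAddCommGroup E] [InnerProductSpace ℝ E] [FiniteDimensional ℝ E]
  [MeasurableSpace E] [BorelSpace E]

lemma integrableOn_div_cone (hE : 2 ≤ Module.finrank ℝ E) {ω : E} (hω : ‖ω‖ = 1)
    {j : ℝ × sphere (0 : E) 1 → ℝ} (hj : Measurable j) {g : ℝ → ℝ} (hg : Integrable g) {B : ℝ}
    (hgB : ∀ ρ, |g ρ| ≤ B) (hjg : ∀ z, |j z| ≤ g z.1) {r : ℝ} (hr : 0 < r) (u : ℝ) :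
    IntegrableOn (fun z => j z / (z.1 + u + r * (1 - ⟪ω, (z.2 : E)⟫)))
      (Set.Ioi (-u) ×ˢ Set.univ) (volume.prod volume.toSphere) := by
  have radial := integrableOn_Ioi_sub_rpow_mul hg hgB (p := -(3 / 4)) (by norm_num) (by norm_num)
    (-u)
  have angular := (integrable_toSphere_one_sub_inner_rpow hE hω (p := -(1 / 4)) (by norm_num)
    (by norm_num)).const_mul (r ^ (-(1 / 4) : ℝ))
  rw [IntegrableOn, ← Measure.prod_restrict, Measure.restrict_univ]
  refine (radial.mul_prod angular).mono' (Measurable.aestronglyMeasurable (by fun_prop)) ?_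
  filter_upwards [Measure.quasiMeasurePreserving_fst.ae (ae_restrict_mem measurableSet_Ioi),
    Measure.quasiMeasurePreserving_snd.ae (ae_toSphere_inner_lt_one hE hω)] with z hρ hσ
  have hρ : 0 < z.1 + u := by linarith [Set.mem_Ioi.1 hρ]
  have hσ : 0 < 1 - ⟪ω, (z.2 : E)⟫ := sub_pos.2 hσ
  have inv_le := inv_add_le_rpow_mul_rpow (θ := 3 / 4) hρ (mul_pos hr hσ) (by norm_num)
    (by norm_num)
  calc ‖j z / (z.1 + u + r * (1 - ⟪ω, (z.2 : E)⟫))‖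
      = |j z| * (z.1 + u + r * (1 - ⟪ω, (z.2 : E)⟫))⁻¹ := by
        rw [norm_div, norm_of_nonneg (r := _ + _) (by positivity), div_eq_mul_inv, norm_eq_abs]
    _ ≤ g z.1 * ((z.1 + u) ^ (-(3 / 4) : ℝ) * (r * (1 - ⟪ω, (z.2 : E)⟫)) ^ (-(1 - 3 / 4) : ℝ)) :=
        mul_le_mul (hjg z) inv_le (by positivity) ((abs_nonneg _).trans (hjg z))
    _ = (z.1 - -u) ^ (-(3 / 4) : ℝ) * g z.1 *
          (r ^ (-(1 / 4) : ℝ) * (1 - ⟪ω, (z.2 : E)⟫) ^ (-(1 / 4) : ℝ)) := by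
        rw [mul_rpow hr.le hσ.le, sub_neg_eq_add]
        norm_num
        ring

variable {ι : Type*} {l : Filter ι} {r u : ι → ℝ}

theorem tendsto_integral_cone [l.IsCountablyGenerated] (hE : 2 ≤ Module.finrank ℝ E) {ω : E}
    (hω : ‖ω‖ = 1) (hu : Tendsto u l atTop) (hru : Tendsto (fun i => r i / u i) l atTop)
    {j : ℝ × sphere (0 : E) 1 → ℝ} (hj : Integrable j (volume.prod volume.toSphere))
    {κ : ι → ℝ → ℝ} (hκm : ∀ i, Measurable (κ i)) {M : ℝ} (hκM : ∀ i ρ, |κ i ρ| ≤ M)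
    (hκ : ∀ ρ, Tendsto (fun i => κ i ρ) l (𝓝 1)) :
    Tendsto (fun i => ∫ z in Set.Ioi (-u i) ×ˢ Set.univ,
        r i * (1 - ⟪ω, (z.2 : E)⟫) / (z.1 + u i + r i * (1 - ⟪ω, (z.2 : E)⟫)) * j z * κ i z.1
          ∂volume.prod volume.toSphere)
      l (𝓝 (∫ z, j z ∂volume.prod volume.toSphere)) := by
  have measurableSet_domain (i : ι) :
      MeasurableSet (Set.Ioi (-u i) ×ˢ (Set.univ : Set (sphere (0 : E) 1))) :=
    measurableSet_Ioi.prod .univ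
  simp only [← integral_indicator (measurableSet_domain _)]
  refine tendsto_integral_filter_of_dominated_convergence (fun z => |j z| * M)
    (.of_forall fun i => ?_) ?_ (hj.abs.mul_const M) ?_
  · have hκi := hκm i
    exact (((Measurable.aestronglyMeasurable (by fun_prop)).mul hj.aestronglyMeasurable).mul
      (Measurable.aestronglyMeasurable (by fun_prop))).indicator (measurableSet_domain i)
  · filter_upwards [hu.eventually_gt_atTop 0, hru.eventually_gt_atTop 0] with i hui hri
    have hri : 0 < r i := (div_pos_iff_of_pos_right hui).1 hri
    refine .of_forall fun z => ?_
    rw [Set.indicator_apply]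
    split_ifs with hz
    · have weight_le := abs_div_add_self_le_one (neg_lt_iff_pos_add.1 hz.1)
        (mul_nonneg hri.le (sub_nonneg.2 (inner_sphere_le_one hω z.2)))
      rw [norm_mul, norm_mul, norm_eq_abs, norm_eq_abs, norm_eq_abs]
      exact mul_le_mul (mul_le_of_le_one_left (abs_nonneg _) weight_le) (hκM i z.1) (abs_nonneg _)
        (abs_nonneg _)
    · simpa using mul_nonneg (abs_nonneg (j z)) ((abs_nonneg _).trans (hκM i z.1))
  · filter_upwards [Measure.quasiMeasurePreserving_snd.ae (ae_toSphere_inner_lt_one hE hω)]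
      with z hσ
    have weight := tendsto_mul_div_add_mul hu hru z.1 (sub_pos.2 hσ)
    have limit := (weight.mul_const (j z)).mul (hκ z.1)
    rw [one_mul, mul_one] at limit
    refine limit.congr' ?_
    filter_upwards [hu.eventually_gt_atTop (-z.1)] with i hi
    rw [Set.indicator_of_mem (by simpa using neg_lt.1 hi)]

end Cone

section JapaneseBracket

lemma one_le_jb (a : ℝ) : 1 ≤ jb a := by
  rw [jb, one_le_sqrt]
  nlinarith [sq_nonneg a]

lemma jb_pos (a : ℝ) : 0 < jb a :=
  one_pos.trans_le (one_le_jb a)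

lemma abs_le_jb (a : ℝ) : |a| ≤ jb a :=
  abs_le_sqrt (by linarith)

lemma jb_neg (a : ℝ) : jb (-a) = jb a := by
  rw [jb, jb, neg_sq]

lemma sq_jb_le_two_mul_jb_sq (a : ℝ) : jb a ^ 2 ≤ 2 * jb (a ^ 2) := by
  rw [jb, sq_sqrt (by positivity)]
  linarith [one_le_jb (a ^ 2), (le_abs_self _).trans (abs_le_jb (a ^ 2))]

@[fun_prop]
lemma measurable_jb : Measurable jb := by
  unfold jb
  fun_prop

lemma tendsto_jb_atTop : Tendsto jb atTop atTop :=
  tendsto_atTop_mono (fun a => (le_abs_self a).trans (abs_le_jb a)) tendsto_id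

lemma integrable_jb_rpow {p : ℝ} (hp : p < -1) : Integrable fun a => jb a ^ p := by
  have := integrable_rpow_neg_one_add_norm_sq (E := ℝ) (μ := volume) (r := -p) (by simp; linarith)
  refine this.congr (ae_of_all _ fun a => ?_)
  simp only [jb, sqrt_eq_rpow, norm_eq_abs, sq_abs]
  rw [← rpow_mul (by positivity)]
  ring_nf

end JapaneseBracket

section RadiationField

open Metric

variable {Φ : ℝ → Pt → ℂ}

instance : IsFiniteMeasure sphM :=
  inferInstanceAs (IsFiniteMeasure (volume : Measure Pt).toSphere)

lemma continuous_dq (hΦ : ContDiff ℝ 1 (Function.uncurry Φ)) :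
    Continuous (Function.uncurry (dq Φ)) := by
  have dq_eq (z : ℝ × Pt) : dq Φ z.1 z.2 = fderiv ℝ (Function.uncurry Φ) z (1, 0) := by
    have line : HasDerivAt (fun s => (s, z.2)) (1, 0) z.1 :=
      (hasDerivAt_id z.1).prodMk (hasDerivAt_const z.1 z.2)
    exact ((hΦ.differentiable one_ne_zero z).hasFDerivAt.comp_hasDerivAt z.1 line).deriv
  exact ((hΦ.continuous_fderiv one_ne_zero).clm_apply continuous_const).congr
    fun z => (dq_eq z).symm

lemma Jr_eq_neg_Llow_mul (α : Ix) (q : ℝ) (σ : Pt) : Jr Φ α q σ = -Llow α σ * Jr Φ none q σ := by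
  rw [Jr, Jr, show Llow none σ = -1 from rfl]
  ring

lemma measurable_Jr (hΦ : ContDiff ℝ 1 (Function.uncurry Φ)) (α : Ix) :
    Measurable fun z : ℝ × sphere (0 : Pt) 1 => Jr Φ α z.1 z.2 := by
  have inclusion : Continuous fun z : ℝ × sphere (0 : Pt) 1 => (z.1, (z.2 : Pt)) := by fun_prop
  have continuous_Llow : Continuous (Llow α) := by
    cases α <;> unfold Llow <;> fun_prop
  exact ((continuous_Llow.comp (continuous_subtype_val.comp continuous_snd)).mul
    (Complex.continuous_im.comp ((hΦ.continuous.comp inclusion).mul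
      (Complex.continuous_conj.comp ((continuous_dq hΦ).comp inclusion))))).measurable

lemma abs_Jr_le {γ A : ℝ} (hΦ : RadBound 1 γ A Φ) (α : Ix) (q : ℝ) (σ : sphere (0 : Pt) 1) :
    |Jr Φ α q σ| ≤ A ^ 2 * jb q ^ (-(1 + 2 * γ)) := by
  have hσ : rad σ = 1 := norm_eq_of_mem_sphere σ
  have hq : 0 < jb q := jb_pos q
  have Llow_le : |Llow α σ| ≤ 1 := by
    cases α with
    | none => simp [Llow]
    | some i => simpa [Llow] using (PiLp.norm_apply_le (σ : Pt) i).trans hσ.le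
  have field_le : ‖Φ q σ‖ * jb q ^ γ ≤ A := by simpa [aIter] using hΦ 0 [] (by simp) q σ hσ
  have deriv_le : jb q * ‖dq Φ q σ‖ * jb q ^ γ ≤ A := by
    simpa [aIter, qdq, abs_of_pos hq] using hΦ 1 [] (by simp) q σ hσ
  calc |Jr Φ α q σ| ≤ 1 * (‖Φ q σ‖ * ‖dq Φ q σ‖) := by
        rw [Jr, abs_mul]
        gcongr
        simpa using Complex.abs_im_le_norm (Φ q σ * (starRingEnd ℂ) (dq Φ q σ))
    _ = (‖Φ q σ‖ * jb q ^ γ) * (jb q * ‖dq Φ q σ‖ * jb q ^ γ) * jb q ^ (-(1 + 2 * γ)) := by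
        rw [neg_add, two_mul, neg_add, rpow_add hq, rpow_add hq, rpow_neg hq.le γ,
          rpow_neg_one]
        field_simp
    _ ≤ A ^ 2 * jb q ^ (-(1 + 2 * γ)) := by
        rw [sq]
        gcongr
        exact le_trans (by positivity) field_le

lemma integrable_Jr {γ A : ℝ} (hγ : 0 < γ) (hΦ : ContDiff ℝ 1 (Function.uncurry Φ))
    (hΦb : RadBound 1 γ A Φ) (α : Ix) :
    Integrable (fun z : ℝ × sphere (0 : Pt) 1 => Jr Φ α z.1 z.2) (volume.prod sphM) :=
  (((integrable_jb_rpow (by linarith)).const_mul (A ^ 2)).comp_fst sphM).mono'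
    (measurable_Jr hΦ α).aestronglyMeasurable (ae_of_all _ fun z => abs_Jr_le hΦb α z.1 z.2)

end RadiationField

section Potential

open Metric

variable {Φ : ℝ → Pt → ℂ} {χ : ℝ → ℝ} {γ A M : ℝ} {ω : Pt}

lemma rad_smul_of_pos {r : ℝ} (hr : 0 < r) (hω : rad ω = 1) : rad (r • ω) = r := by
  rw [rad, norm_smul, norm_of_nonneg hr.le, ← rad, hω, mul_one]

lemma sum_Lup_mul_Llow (ω σ : Pt) : ∑ α, Lup α ω * Llow α σ = ⟪ω, σ⟫ - 1 := by
  simp [Fintype.sum_option, Lup, Llow, PiLp.inner_apply, mul_comm, neg_add_eq_sub]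

lemma AtildeL_smul_eq_sum {r : ℝ} (hr : 0 < r) (hω : rad ω = 1) (t : ℝ) :
    AtildeL χ Φ t (r • ω) = ∑ α, Lup α ω * Atilde χ Φ α t (r • ω) := by
  simp [AtildeL, Fintype.sum_option, Lup, rad_smul_of_pos hr hω, inv_mul_cancel_left₀ hr.ne']

lemma integrableOn_Jr_div_mul (hγ : 0 < γ) (hΦ : ContDiff ℝ 1 (Function.uncurry Φ))
    (hΦb : RadBound 1 γ A Φ) (hχ : Measurable χ) (hχM : ∀ s, |χ s| ≤ M) {r : ℝ}
    (hr : 0 < r) (hω : rad ω = 1) (α : Ix) (u : ℝ) :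
    IntegrableOn (fun z => Jr Φ α z.1 z.2 / (z.1 + u + r * (1 - ⟪ω, (z.2 : Pt)⟫)) *
        χ (jb z.1 / (2 * r + u))) (Set.Ioi (-u) ×ˢ Set.univ) (volume.prod sphM) := by
  have decay_le (ρ : ℝ) : |A ^ 2 * jb ρ ^ (-(1 + 2 * γ))| ≤ A ^ 2 := by
    rw [abs_of_nonneg (mul_nonneg (sq_nonneg A) (rpow_nonneg (jb_pos ρ).le _))]
    exact mul_le_of_le_one_right (sq_nonneg A)
      (rpow_le_one_of_one_le_of_nonpos (one_le_jb ρ) (by linarith))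
  exact (integrableOn_div_cone (by simp) hω (measurable_Jr hΦ α)
    ((integrable_jb_rpow (by linarith)).const_mul (A ^ 2)) decay_le
    (fun z => abs_Jr_le hΦb α z.1 z.2) hr u).mul_bdd
      (Measurable.aestronglyMeasurable (by fun_prop)) (ae_of_all _ fun z => hχM _)

lemma Atilde_smul_eq_integral_prod (hγ : 0 < γ) (hΦ : ContDiff ℝ 1 (Function.uncurry Φ))
    (hΦb : RadBound 1 γ A Φ) (hχ : Measurable χ) (hχM : ∀ s, |χ s| ≤ M) {r : ℝ}
    (hr : 0 < r) (hω : rad ω = 1) (α : Ix) (u : ℝ) :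
    Atilde χ Φ α (r + u) (r • ω) = 1 / (4 * π) * ∫ z in Set.Ioi (-u) ×ˢ Set.univ,
      Jr Φ α z.1 z.2 / (z.1 + u + r * (1 - ⟪ω, (z.2 : Pt)⟫)) * χ (jb z.1 / (2 * r + u))
        ∂volume.prod sphM := by
  rw [setIntegral_prod _ (integrableOn_Jr_div_mul hγ hΦ hΦb hχ hχM hr hω α u), Atilde,
    rad_smul_of_pos hr hω]
  have argument (ρ : ℝ) (σ : Pt) : ρ + u + r * (1 - ⟪ω, σ⟫) = r + u + ρ - ⟪r • ω, σ⟫ := by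
    rw [real_inner_smul_left]
    ring
  have cutoff_scale : 2 * r + u = r + u + r := by ring
  simp only [argument, cutoff_scale, integral_mul_const, Measure.restrict_univ, sub_add_cancel_left]

theorem mul_AtildeL_smul_eq_integral (hγ : 0 < γ) (hΦ : ContDiff ℝ 1 (Function.uncurry Φ))
    (hΦb : RadBound 1 γ A Φ) (hχ : Measurable χ) (hχM : ∀ s, |χ s| ≤ M) {r : ℝ}
    (hr : 0 < r) (hω : rad ω = 1) (u : ℝ) :
    r * AtildeL χ Φ (r + u) (r • ω) = 1 / (4 * π) * ∫ z in Set.Ioi (-u) ×ˢ Set.univ,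
      r * (1 - ⟪ω, (z.2 : Pt)⟫) / (z.1 + u + r * (1 - ⟪ω, (z.2 : Pt)⟫)) * Jr Φ none z.1 z.2 *
        χ (jb z.1 / (2 * r + u)) ∂volume.prod sphM := by
  have contraction (z : ℝ × sphere (0 : Pt) 1) :
      r * (1 - ⟪ω, (z.2 : Pt)⟫) / (z.1 + u + r * (1 - ⟪ω, (z.2 : Pt)⟫)) * Jr Φ none z.1 z.2 *
          χ (jb z.1 / (2 * r + u)) =
        ∑ α, r * Lup α ω * (Jr Φ α z.1 z.2 / (z.1 + u + r * (1 - ⟪ω, (z.2 : Pt)⟫)) *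
          χ (jb z.1 / (2 * r + u))) := by
    rw [← neg_sub ⟪ω, (z.2 : Pt)⟫ 1, ← sum_Lup_mul_Llow, ← Finset.sum_neg_distrib, Finset.mul_sum,
      Finset.sum_div, Finset.sum_mul, Finset.sum_mul]
    refine Finset.sum_congr rfl fun α _ => ?_
    rw [Jr_eq_neg_Llow_mul α]
    ring
  simp only [contraction]
  rw [integral_finsetSum _ fun α _ =>
    (integrableOn_Jr_div_mul hγ hΦ hΦb hχ hχM hr hω α u).const_mul _, AtildeL_smul_eq_sum hr hω,
    Finset.mul_sum, Finset.mul_sum]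
  refine Finset.sum_congr rfl fun α _ => ?_
  rw [integral_const_mul, Atilde_smul_eq_integral_prod hγ hΦ hΦb hχ hχM hr hω]
  ring

variable {ι : Type*} {l : Filter ι} [l.IsCountablyGenerated] {r u : ι → ℝ}

theorem tendsto_mul_AtildeL_smul (hγ : 0 < γ) (hΦ : ContDiff ℝ 1 (Function.uncurry Φ))
    (hΦb : RadBound 1 γ A Φ) (hχ : Measurable χ) (hχM : ∀ s, |χ s| ≤ M)
    (hχ0 : Tendsto χ (𝓝 0) (𝓝 1)) (hω : rad ω = 1) (hu : Tendsto u l atTop)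
    (hru : Tendsto (fun i => r i / u i) l atTop) :
    Tendsto (fun i => r i * AtildeL χ Φ (r i + u i) (r i • ω)) l
      (𝓝 (1 / (4 * π) * ∫ ρ : ℝ, ∫ σ : sphere (0 : Pt) 1, Jr Φ none ρ σ ∂sphM)) := by
  have hr : Tendsto r l atTop := by
    refine (hu.atTop_mul_atTop₀ hru).congr' ?_
    filter_upwards [hu.eventually_gt_atTop 0] with i hui using mul_div_cancel₀ _ hui.ne'
  have cutoff_tendsto (ρ : ℝ) : Tendsto (fun i => χ (jb ρ / (2 * r i + u i))) l (𝓝 1) :=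
    hχ0.comp (((hr.const_mul_atTop two_pos).atTop_add_atTop hu).const_div_atTop (jb ρ))
  have limit := tendsto_integral_cone (by simp) hω hu hru (integrable_Jr hγ hΦ hΦb none)
    (κ := fun i ρ => χ (jb ρ / (2 * r i + u i))) (fun i => by fun_prop) (fun _ _ => hχM _)
    cutoff_tendsto
  rw [← integral_prod _ (integrable_Jr hγ hΦ hΦb none)]
  refine (limit.const_mul (1 / (4 * π))).congr' ?_
  filter_upwards [hr.eventually_gt_atTop 0] with i hri
  exact (mul_AtildeL_smul_eq_integral hγ hΦ hΦb hχ hχM hri hω (u i)).symm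

theorem stmt9_general [l.NeBot] (hγ : 0 < γ) (hΦ : ContDiff ℝ 1 (Function.uncurry Φ))
    (hΦb : RadBound 1 γ A Φ) (hχ : Measurable χ) (hχM : ∀ s, |χ s| ≤ M)
    (hχ0 : Tendsto χ (𝓝 0) (𝓝 1)) (hω : rad ω = 1) (hu : Tendsto u l atTop)
    (hru : Tendsto (fun i => r i / u i) l atTop) {Q : ℝ}
    (hasym : Tendsto (fun i => r i * AtildeL χ Φ (r i + u i) (r i • ω)) l (𝓝 (Q / (4 * π)))) :
    Q = ∫ ρ : ℝ, ∫ σ : sphere (0 : Pt) 1, Jr Φ none ρ σ ∂sphM := by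
  have := tendsto_nhds_unique hasym (tendsto_mul_AtildeL_smul hγ hΦ hΦb hχ hχM hχ0 hω hu hru)
  field_simp at this
  exact this

end Potential

section Asymptotics

lemma exists_abs_le_of_eq_const {f : ℝ → ℝ} (hf : Continuous f) {a b c d : ℝ} (hab : a ≤ b)
    (hfa : ∀ s ≤ a, f s = c) (hfb : ∀ s, b ≤ s → f s = d) : ∃ M, ∀ s, |f s| ≤ M := by
  obtain ⟨M, hM⟩ := isCompact_Icc.exists_bound_of_continuousOn (s := Set.Icc a b) hf.continuousOn
  refine ⟨M, fun s => ?_⟩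
  rcases le_total s a with hsa | has
  · rw [hfa s hsa, ← hfa a le_rfl]
    exact hM a (Set.left_mem_Icc.2 hab)
  rcases le_total s b with hsb | hbs
  · exact hM s ⟨has, hsb⟩
  · rw [hfb s hbs, ← hfb b le_rfl]
    exact hM b (Set.right_mem_Icc.2 hab)

lemma tendsto_jb_rpow_error {γ ε : ℝ} (hγ : 0 < γ) (hε1 : ε < 1) (C₀ : ℝ) :
    Tendsto (fun s : ℝ => C₀ * (ε * jb s ^ (-γ) + ε * jb s ^ (1 - ε) * jb (s ^ 2) ^ (ε - 1)))
      atTop (𝓝 0) := by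
  have first : Tendsto (fun s => jb s ^ (-γ)) atTop (𝓝 0) :=
    (tendsto_rpow_neg_atTop hγ).comp tendsto_jb_atTop
  have ratio : Tendsto (fun s => jb s / jb (s ^ 2)) atTop (𝓝 0) := by
    refine squeeze_zero (fun s => (div_pos (jb_pos s) (jb_pos _)).le) (fun s => ?_)
      (tendsto_jb_atTop.const_div_atTop 2)
    rw [div_le_div_iff₀ (jb_pos _) (jb_pos _), ← sq]
    exact sq_jb_le_two_mul_jb_sq s
  have second : Tendsto (fun s => jb s ^ (1 - ε) * jb (s ^ 2) ^ (ε - 1)) atTop (𝓝 0) := by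
    have := ratio.rpow_const (p := 1 - ε) (.inr (by linarith))
    rw [zero_rpow (by linarith)] at this
    refine this.congr fun s => ?_
    rw [div_rpow (jb_pos _).le (jb_pos _).le, div_eq_mul_inv, ← rpow_neg (jb_pos _).le, neg_sub]
  simpa [mul_assoc] using ((first.const_mul ε).add (second.const_mul ε)).const_mul C₀

lemma tendsto_mul_AtildeL_of_abs_sub_le {χ : ℝ → ℝ} {Φ : ℝ → Pt → ℂ} {γ ε Q C₀ : ℝ} (hγ : 0 < γ)
    (hε1 : ε < 1) {ω : Pt} (hω : rad ω = 1)
    (hasym : ∀ (t : ℝ) (x : Pt), 0 ≤ t → x ≠ 0 → rad x - t ≤ 0 →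
      |rad x * AtildeL χ Φ t x - Q / (4 * π)|
        ≤ C₀ * (ε * jb (max (t - rad x) 0) ^ (-γ)
            + ε * jb (rad x - t) ^ (1 - ε) * jb (rad x) ^ (ε - 1))) :
    Tendsto (fun s : ℝ => s ^ 2 * AtildeL χ Φ (s ^ 2 + s) (s ^ 2 • ω)) atTop
      (𝓝 (Q / (4 * π))) := by
  rw [tendsto_iff_norm_sub_tendsto_zero]
  refine squeeze_zero' (.of_forall fun s => norm_nonneg _) ?_ (tendsto_jb_rpow_error hγ hε1 C₀)
  filter_upwards [eventually_gt_atTop 0] with s hs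
  have hrad : rad (s ^ 2 • ω) = s ^ 2 := rad_smul_of_pos (by positivity) hω
  have hx : s ^ 2 • ω ≠ 0 := fun h => (pow_pos hs 2).ne' (by rw [← hrad, h, rad, norm_zero])
  have bound := hasym (s ^ 2 + s) (s ^ 2 • ω) (by positivity) hx (by rw [hrad]; linarith)
  rwa [hrad, add_sub_cancel_left, max_eq_left hs.le, sub_add_cancel_left, jb_neg] at bound

end Asymptotics

/-- Proposition 3.1, the charge in terms of the radiation field:
if `rÃ_L` is asymptotic to `𝐪/4π` in the stated sense, then
`𝐪 = ∫∫ 𝒥₀ dS dρ = −∫∫ Im(Φ conj ∂_qΦ) dS dρ`. -/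
theorem stmt9 (γ ε : ℝ) (hγ : 1 / 2 < γ) (hγ1 : γ < 1) (hε : 0 < ε) (hε1 : ε < 1)
    (χ : ℝ → ℝ) (hχ : ContDiff ℝ (⊤ : ℕ∞) χ)
    (hχ1 : ∀ s : ℝ, s ≤ 1 / 2 → χ s = 1) (hχ0 : ∀ s : ℝ, 3 / 4 ≤ s → χ s = 0)
    (Φ : ℝ → Pt → ℂ) (hΦ : Smooth2 Φ) (hΦb : RadBound 1 γ ε Φ)
    (Q C₀ : ℝ) (hC₀ : 0 < C₀)
    (hasym : ∀ (t : ℝ) (x : Pt), 0 ≤ t → x ≠ 0 → rad x - t ≤ 0 →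
      |rad x * AtildeL χ Φ t x - Q / (4 * π)|
        ≤ C₀ * (ε * jb (max (t - rad x) 0) ^ (-γ)
            + ε * jb (rad x - t) ^ (1 - ε) * jb (rad x) ^ (ε - 1))) :
    Q = ∫ ρ : ℝ, ∫ σ : Metric.sphere (0 : Pt) 1, Jr Φ none ρ σ ∂sphM := by
  have hω : rad (EuclideanSpace.single 0 1) = 1 := by simp [rad]
  obtain ⟨M, hχM⟩ := exists_abs_le_of_eq_const hχ.continuous (by norm_num) hχ1 hχ0
  exact stmt9_general (by linarith) (hΦ.of_le (by exact_mod_cast le_top)) hΦb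
    hχ.continuous.measurable hχM (hχ1 0 (by norm_num) ▸ hχ.continuous.tendsto 0) hω tendsto_id
    (tendsto_id.congr fun s => by simp [sq])
    (tendsto_mul_AtildeL_of_abs_sub_le (by linarith) hε1 hω hasym)
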